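/- arXiv:gr-qc/0507042 — 3 statements merged into one kernel-verified Lean document; each statement's English description precedes it below -/
import Mathlib

section
/- There is a constant C > 0 such that for all e₁, e₂ ∈ (0, 2/3] and every f ∈ L¹₂(ℝ³): |ρ(e₁,f) − ρ(e₂,f)| ≤ (C/(e₁⁴ e₂⁶)) ‖f‖ |e₁ − e₂|. -/
open MeasureTheory Real

noncomputable section

/-- Momentum space `ℝ³`. -/
abbrev R3 := EuclideanSpace ℝ (Fin 3)

/-- The surface measure on the unit sphere `S²` of `ℝ³`. -/
def sphMeasure : Measure (Metric.sphere (0:R3) 1) := (volume : Measure R3).toSphere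

/-- `p⁰ = √(1 + a²|p̄|²)`. -/
def pZero (a : ℝ) (p : R3) : ℝ := Real.sqrt (1 + a ^ 2 * ‖p‖ ^ 2)

/-- The function `b(p̄, q̄, ω)` of the collision law (Glassey's formula on RW space-time). -/
def collb (a : ℝ) (p q : R3) (ω : R3) : ℝ :=
  2 * pZero a p * pZero a q * (pZero a p + pZero a q) * a ^ 2 *
    (inner ℝ ω ((pZero a q)⁻¹ • q - (pZero a p)⁻¹ • p) : ℝ) /
    ((pZero a p + pZero a q) ^ 2 - a ^ 4 * (inner ℝ ω (p + q) : ℝ) ^ 2)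

/-- Post-collision momentum `p̄' = p̄ + b ω`. -/
def pColl (a : ℝ) (p q : R3) (ω : R3) : R3 := p + collb a p q ω • ω

/-- Post-collision momentum `q̄' = q̄ - b ω`. -/
def qColl (a : ℝ) (p q : R3) (ω : R3) : R3 := q - collb a p q ω • ω

/-- A collision kernel is a function `A(a, p̄, q̄, p̄', q̄')`. -/
abbrev Kernel := ℝ → R3 → R3 → R3 → R3 → ℝ

/-- Boundedness assumption `0 ≤ A ≤ C₁`. -/
def KernelBounded (A : Kernel) (C₁ : ℝ) : Prop :=
  ∀ a p q p' q', 0 ≤ A a p q p' q' ∧ A a p q p' q' ≤ C₁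

/-- First symmetry assumption `A(a,p̄,q̄,p̄',q̄') = A(a,q̄,p̄,q̄',p̄')`. -/
def KernelSymm₁ (A : Kernel) : Prop :=
  ∀ a p q p' q', A a p q p' q' = A a q p q' p'

/-- Second symmetry assumption `A(a,p̄,q̄,p̄',q̄') = A(a,p̄',q̄',p̄,q̄)`. -/
def KernelSymm₂ (A : Kernel) : Prop :=
  ∀ a p q p' q', A a p q p' q' = A a p' q' p q

/-- Lipschitz continuity of the kernel in the parameter `a`. -/
def KernelLip (A : Kernel) (γ : ℝ) : Prop :=
  ∀ a₁ a₂ p q p' q', |A a₁ p q p' q' - A a₂ p q p' q'| ≤ γ * |a₁ - a₂|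

/-- Gain term `Q⁺(f,g)(p̄)` of the collision operator, with parameter `a`. -/
def Qplus (A : Kernel) (a : ℝ) (f g : R3 → ℝ) (p : R3) : ℝ :=
  ∫ q : R3, (a ^ 3 / pZero a q) *
    ∫ ω : Metric.sphere (0:R3) 1,
      f (pColl a p q ω) * g (qColl a p q ω) *
        A a p q (pColl a p q ω) (qColl a p q ω) ∂sphMeasure

/-- Loss term `Q⁻(f,g)(p̄)` of the collision operator, with parameter `a`. -/
def Qminus (A : Kernel) (a : ℝ) (f g : R3 → ℝ) (p : R3) : ℝ :=
  ∫ q : R3, (a ^ 3 / pZero a q) *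
    ∫ ω : Metric.sphere (0:R3) 1,
      f p * g q * A a p q (pColl a p q ω) (qColl a p q ω) ∂sphMeasure

/-- The collision operator `Q = Q⁺ - Q⁻`. -/
def Qcoll (A : Kernel) (a : ℝ) (f g : R3 → ℝ) (p : R3) : ℝ :=
  Qplus A a f g p - Qminus A a f g p

/-- The weight `√(1+|p̄|²)`. -/
def wt (p : R3) : ℝ := Real.sqrt (1 + ‖p‖ ^ 2)

/-- The norm of the weighted space `L¹₂(ℝ³)`. -/
def L12norm (f : R3 → ℝ) : ℝ := ∫ p : R3, wt p * |f p|

/-- Membership in the weighted space `L¹₂(ℝ³)`. -/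
def MemL12 (f : R3 → ℝ) : Prop :=
  AEStronglyMeasurable f (volume : Measure R3) ∧
    Integrable (fun p => wt p * |f p|) (volume : Measure R3)

/-- Membership in `X_r = {f ∈ L¹₂ : f ≥ 0 a.e., ‖f‖ ≤ r}`. -/
def MemXr (r : ℝ) (f : R3 → ℝ) : Prop :=
  MemL12 f ∧ (∀ᵐ p : R3, 0 ≤ f p) ∧ L12norm f ≤ r

/-- Continuity of a curve `t ↦ f t` with values in `L¹₂(ℝ³)`, on a set `I` of times. -/
def ContL12 (I : Set ℝ) (f : ℝ → R3 → ℝ) : Prop :=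
  ∀ t ∈ I, ∀ ε > 0, ∃ δ > 0, ∀ s ∈ I, |s - t| < δ →
    L12norm (fun p => f s p - f t p) < ε

/-- The Boltzmann integral equation on `[t₀, t₀+T]` with expansion factor `a`,
collision kernel `A` and initial datum `f₀`. -/
def SolvesBoltzmann (A : Kernel) (a : ℝ → ℝ) (t₀ T : ℝ) (f₀ : R3 → ℝ)
    (f : ℝ → R3 → ℝ) : Prop :=
  ∀ t ∈ Set.Icc (0:ℝ) T,
    f (t₀ + t) =ᵐ[(volume : Measure R3)] fun p =>
      f₀ p + ∫ s in t₀..(t₀ + t), (pZero (a s) p)⁻¹ * Qcoll A (a s) (f s) (f s) p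

/-- Action of a `3 × 3` matrix on `ℝ³`. -/
def rotv (M : Matrix (Fin 3) (Fin 3) ℝ) (p : R3) : R3 := WithLp.toLp 2 (M.mulVec p)

/-- Rotation invariance of the collision kernel under `SO(3)`. -/
def KernelRot (A : Kernel) : Prop :=
  ∀ M ∈ Matrix.orthogonalGroup (Fin 3) ℝ, M.det = 1 →
    ∀ a p q p' q', A a (rotv M p) (rotv M q) (rotv M p') (rotv M q') = A a p q p' q'

/-- The density `ρ(e, f) = e⁻³ ∫ √(1 + |p̄|²/e²) f(p̄) dp̄`. -/
def rhoD (e : ℝ) (f : R3 → ℝ) : ℝ :=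
  (1 / e ^ 3) * ∫ p : R3, Real.sqrt (1 + ‖p‖ ^ 2 / e ^ 2) * f p

/-- The pressure `P(e, f) = e⁻⁵ ∫ (p¹)² (1 + |p̄|²/e²)^{-1/2} f(p̄) dp̄`. -/
def PD (e : ℝ) (f : R3 → ℝ) : ℝ :=
  (1 / e ^ 5) * ∫ p : R3, (p 0) ^ 2 * (Real.sqrt (1 + ‖p‖ ^ 2 / e ^ 2))⁻¹ * f p

/-- The component `T⁰⁰ = a³ ∫ √(1 + a²|p̄|²) g(p̄) dp̄` of the stress-matter tensor. -/
def Tup00 (a : ℝ) (g : R3 → ℝ) : ℝ :=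
  a ^ 3 * ∫ p : R3, Real.sqrt (1 + a ^ 2 * ‖p‖ ^ 2) * g p

/-- The component `T¹¹ = a³ ∫ (p¹)² g(p̄) (1 + a²|p̄|²)^{-1/2} dp̄` of the stress-matter tensor. -/
def Tup11 (a : ℝ) (g : R3 → ℝ) : ℝ :=
  a ^ 3 * ∫ p : R3, (p 0) ^ 2 * g p / Real.sqrt (1 + a ^ 2 * ‖p‖ ^ 2)

/-- `a` (positive, twice differentiable, with first and second derivatives `a₁`, `a₂` on
`[0, l]`) solves the Einstein evolution equation with cosmological constant `Λ` and sources
generated by the distribution function `f`. -/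
def EinsteinEvol (Λ l : ℝ) (f : ℝ → R3 → ℝ) (a a₁ a₂ : ℝ → ℝ) : Prop :=
  (∀ t ∈ Set.Icc (0:ℝ) l, 0 < a t) ∧
  (∀ t ∈ Set.Icc (0:ℝ) l, HasDerivWithinAt a (a₁ t) (Set.Icc (0:ℝ) l) t) ∧
  (∀ t ∈ Set.Icc (0:ℝ) l, HasDerivWithinAt a₁ (a₂ t) (Set.Icc (0:ℝ) l) t) ∧
  (∀ t ∈ Set.Icc (0:ℝ) l,
    a₂ t / a t = -(4 * π / 3) * (Tup00 (a t) (f t) + 3 * a t ^ 2 * Tup11 (a t) (f t)) + Λ / 3)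

end

/-!
For `e > 0` one has `e⁻³ √(1 + |p|²/e²) = √(e² + |p|²) / e⁴`. The numerator is the modulus of
`e + |p| i`, so it is `1`-Lipschitz in `e`, and it is at most `√(1 + |p|²)` when `e ≤ 1`; the
denominator is a power of `e`. The quotient is therefore Lipschitz in `e` with a constant
proportional to `√(1 + |p|²)`, and integrating against `f` gives the estimate for `ρ`.
-/

/-- The factor `e⁻ᵈ √(1 + x²/e²)` with which a momentum of length `x` enters the density in `d`
space dimensions; the density `ρ` is the case `d = 3`. -/
noncomputable def energyWeight (d : ℕ) (e x : ℝ) : ℝ :=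
  1 / e ^ d * √(1 + x ^ 2 / e ^ 2)

theorem abs_sqrt_sq_add_sq_sub_le (a b x : ℝ) :
    |√(a ^ 2 + x ^ 2) - √(b ^ 2 + x ^ 2)| ≤ |a - b| := by
  have h := abs_norm_sub_norm_le (a + x * Complex.I) (b + x * Complex.I)
  rwa [add_sub_add_right_eq_sub, ← Complex.ofReal_sub, Complex.norm_real, Real.norm_eq_abs,
    Complex.norm_add_mul_I, Complex.norm_add_mul_I] at h

theorem sqrt_sq_add_sq_le_mul_sqrt_one_add_sq {R e : ℝ} (hR : 1 ≤ R) (he : |e| ≤ R) (x : ℝ) :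
    √(e ^ 2 + x ^ 2) ≤ R * √(1 + x ^ 2) := by
  have he2 : e ^ 2 ≤ R ^ 2 := sq_le_sq' (neg_le_of_abs_le he) (le_of_abs_le he)
  have hR2 : x ^ 2 ≤ R ^ 2 * x ^ 2 := le_mul_of_one_le_left (sq_nonneg x) (one_le_pow₀ hR)
  calc √(e ^ 2 + x ^ 2) ≤ √(R ^ 2 * (1 + x ^ 2)) := Real.sqrt_le_sqrt (by linarith)
    _ = R * √(1 + x ^ 2) := by
      rw [Real.sqrt_mul (sq_nonneg R), Real.sqrt_sq (zero_le_one.trans hR)]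

theorem abs_pow_succ_sub_pow_succ_le {α : Type*} [CommRing α] [LinearOrder α]
    [IsOrderedRing α] {a b R : α} (ha : |a| ≤ R) (hb : |b| ≤ R) (n : ℕ) :
    |a ^ (n + 1) - b ^ (n + 1)| ≤ (n + 1) * R ^ n * |a - b| :=
  calc |a ^ (n + 1) - b ^ (n + 1)|
      ≤ |a - b| * ↑(n + 1) * max |a| |b| ^ n := abs_pow_sub_pow_le ..
    _ ≤ |a - b| * ↑(n + 1) * R ^ n := by gcongr; exact max_le ha hb
    _ = (n + 1) * R ^ n * |a - b| := by push_cast; ring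

section EnergyWeight

variable {R e e₁ e₂ : ℝ}

theorem continuous_energyWeight (d : ℕ) (e : ℝ) : Continuous (energyWeight d e) := by
  unfold energyWeight
  fun_prop

theorem energyWeight_eq_div (d : ℕ) (he : 0 < e) (x : ℝ) :
    energyWeight d e x = √(e ^ 2 + x ^ 2) / e ^ (d + 1) := by
  have h : 1 + x ^ 2 / e ^ 2 = (e ^ 2 + x ^ 2) / e ^ 2 := by field_simp
  rw [energyWeight, h, Real.sqrt_div' _ (sq_nonneg e), Real.sqrt_sq he.le,
    div_mul_div_comm, one_mul, ← pow_succ]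

theorem abs_energyWeight_le (d : ℕ) (hR : 1 ≤ R) (he : e ∈ Set.Ioc 0 R) (x : ℝ) :
    |energyWeight d e x| ≤ R / e ^ (d + 1) * √(1 + x ^ 2) := by
  have he₀ : 0 < e := he.1
  rw [energyWeight_eq_div d he₀, abs_of_nonneg (by positivity), div_mul_eq_mul_div]
  gcongr
  exact sqrt_sq_add_sq_le_mul_sqrt_one_add_sq hR ((abs_of_pos he₀).trans_le he.2) x

theorem abs_energyWeight_sub_le (d : ℕ) (hR : 1 ≤ R) (h₁ : e₁ ∈ Set.Ioc 0 R)
    (h₂ : e₂ ∈ Set.Ioc 0 R) (x : ℝ) :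
    |energyWeight d e₁ x - energyWeight d e₂ x| ≤
      (d + 2) * R ^ (d + 1) / (e₁ ^ (d + 1) * e₂ ^ (d + 1)) * |e₁ - e₂| * √(1 + x ^ 2) := by
  obtain ⟨h₁₀, h₁R⟩ := h₁
  obtain ⟨h₂₀, h₂R⟩ := h₂
  have : 0 ≤ R := zero_le_one.trans hR
  have habs₁ : |e₁| ≤ R := (abs_of_pos h₁₀).trans_le h₁R
  have habs₂ : |e₂| ≤ R := (abs_of_pos h₂₀).trans_le h₂R
  set w := √(1 + x ^ 2)
  set s₁ := √(e₁ ^ 2 + x ^ 2)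
  set s₂ := √(e₂ ^ 2 + x ^ 2)
  have hw : 1 ≤ w := Real.one_le_sqrt.2 (le_add_of_nonneg_right (sq_nonneg x))
  have hs₁ : |s₁| ≤ R * w :=
    (abs_of_nonneg (Real.sqrt_nonneg _)).trans_le
      (sqrt_sq_add_sq_le_mul_sqrt_one_add_sq hR habs₁ x)
  have hdenominators : |s₁ * (e₂ ^ (d + 1) - e₁ ^ (d + 1))| ≤
      R * w * ((d + 1) * R ^ d * |e₁ - e₂|) := by
    rw [abs_mul, abs_sub_comm (e₂ ^ (d + 1))]
    gcongr
    exact abs_pow_succ_sub_pow_succ_le habs₁ habs₂ d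
  have hnumerators : |e₁ ^ (d + 1) * (s₁ - s₂)| ≤ R ^ (d + 1) * (|e₁ - e₂| * w) := by
    rw [abs_mul, abs_pow]
    gcongr
    exact (abs_sqrt_sq_add_sq_sub_le e₁ e₂ x).trans (le_mul_of_one_le_right (abs_nonneg _) hw)
  calc |energyWeight d e₁ x - energyWeight d e₂ x|
      = |s₁ * (e₂ ^ (d + 1) - e₁ ^ (d + 1)) + e₁ ^ (d + 1) * (s₁ - s₂)| /
          (e₁ ^ (d + 1) * e₂ ^ (d + 1)) := by
        rw [energyWeight_eq_div d h₁₀, energyWeight_eq_div d h₂₀,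
          div_sub_div _ _ (by positivity) (by positivity), abs_div,
          abs_of_pos (by positivity : 0 < e₁ ^ (d + 1) * e₂ ^ (d + 1))]
        congr 2
        ring
    _ ≤ (R * w * ((d + 1) * R ^ d * |e₁ - e₂|) + R ^ (d + 1) * (|e₁ - e₂| * w)) /
          (e₁ ^ (d + 1) * e₂ ^ (d + 1)) := by
        gcongr
        exact (abs_add_le _ _).trans (add_le_add hdenominators hnumerators)
    _ = (d + 2) * R ^ (d + 1) / (e₁ ^ (d + 1) * e₂ ^ (d + 1)) * |e₁ - e₂| * w := by ring

end EnergyWeight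

section WeightedIntegrals

variable {α F : Type*} [MeasurableSpace α] {μ : Measure α} [NormedAddCommGroup F]
  [NormedSpace ℝ F] {f : α → F} {u v w : α → ℝ} {c : ℝ}

theorem integrable_smul_of_abs_le_const_mul (hf : AEStronglyMeasurable f μ)
    (hu : AEStronglyMeasurable u μ) (hwf : Integrable (fun p => w p * ‖f p‖) μ)
    (h : ∀ᵐ p ∂μ, |u p| ≤ c * w p) : Integrable (fun p => u p • f p) μ := by
  refine (hwf.const_mul c).mono' (hu.smul hf) (h.mono fun p hp => ?_)
  rw [norm_smul, Real.norm_eq_abs, ← mul_assoc]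
  exact mul_le_mul_of_nonneg_right hp (norm_nonneg _)

theorem norm_integral_smul_sub_integral_smul_le (hu : Integrable (fun p => u p • f p) μ)
    (hv : Integrable (fun p => v p • f p) μ) (hwf : Integrable (fun p => w p * ‖f p‖) μ)
    (h : ∀ᵐ p ∂μ, |u p - v p| ≤ c * w p) :
    ‖(∫ p, u p • f p ∂μ) - ∫ p, v p • f p ∂μ‖ ≤ c * ∫ p, w p * ‖f p‖ ∂μ := by
  rw [← integral_sub hu hv, ← integral_const_mul]
  refine norm_integral_le_of_norm_le (hwf.const_mul c) (h.mono fun p hp => ?_)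
  rw [← sub_smul, norm_smul, Real.norm_eq_abs, ← mul_assoc]
  exact mul_le_mul_of_nonneg_right hp (norm_nonneg _)

end WeightedIntegrals

theorem rhoD_eq_integral_energyWeight (e : ℝ) (f : R3 → ℝ) :
    rhoD e f = ∫ p, energyWeight 3 e ‖p‖ • f p := by
  simp only [rhoD, energyWeight, smul_eq_mul, mul_assoc, integral_const_mul]

theorem density_lipschitz_general {E F : Type*} [NormedAddCommGroup E] [MeasurableSpace E]
    [OpensMeasurableSpace E] [NormedAddCommGroup F] [NormedSpace ℝ F] {μ : Measure E} (d : ℕ)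
    {R e₁ e₂ : ℝ} (hR : 1 ≤ R) (h₁ : e₁ ∈ Set.Ioc 0 R) (h₂ : e₂ ∈ Set.Ioc 0 R) {f : E → F}
    (hf : AEStronglyMeasurable f μ) (hwf : Integrable (fun p => √(1 + ‖p‖ ^ 2) * ‖f p‖) μ) :
    ‖(∫ p, energyWeight d e₁ ‖p‖ • f p ∂μ) - ∫ p, energyWeight d e₂ ‖p‖ • f p ∂μ‖ ≤
      (d + 2) * R ^ (d + 1) / (e₁ ^ (d + 1) * e₂ ^ (d + 1)) *
        (∫ p, √(1 + ‖p‖ ^ 2) * ‖f p‖ ∂μ) * |e₁ - e₂| := by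
  have hint : ∀ e ∈ Set.Ioc 0 R, Integrable (fun p => energyWeight d e ‖p‖ • f p) μ :=
    fun e he => integrable_smul_of_abs_le_const_mul hf
      ((continuous_energyWeight d e).measurable.comp measurable_norm).aestronglyMeasurable hwf
      (.of_forall fun p => abs_energyWeight_le d hR he ‖p‖)
  rw [mul_right_comm]
  exact norm_integral_smul_sub_integral_smul_le (hint e₁ h₁) (hint e₂ h₂) hwf
    (.of_forall fun p => abs_energyWeight_sub_le d hR h₁ h₂ ‖p‖)

/-- Lipschitz estimate in `e` for the density `ρ(e, f)`. -/
theorem density_lipschitz :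
    ∃ C : ℝ, 0 < C ∧ ∀ e₁ ∈ Set.Ioc (0:ℝ) (2/3), ∀ e₂ ∈ Set.Ioc (0:ℝ) (2/3),
      ∀ f : R3 → ℝ, MemL12 f →
        |rhoD e₁ f - rhoD e₂ f| ≤ C / (e₁ ^ 4 * e₂ ^ 6) * L12norm f * |e₁ - e₂| := by
  refine ⟨5, by norm_num, fun e₁ h₁ e₂ h₂ f hf => ?_⟩
  have hsub : Set.Ioc (0 : ℝ) (2 / 3) ⊆ Set.Ioc 0 1 := Set.Ioc_subset_Ioc_right (by norm_num)
  have he₁ : 0 < e₁ := h₁.1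
  have he₂ : 0 < e₂ := h₂.1
  have hnorm : 0 ≤ L12norm f :=
    integral_nonneg fun p => mul_nonneg (Real.sqrt_nonneg _) (abs_nonneg _)
  calc |rhoD e₁ f - rhoD e₂ f|
      ≤ ((3 : ℕ) + 2) * 1 ^ 4 / (e₁ ^ 4 * e₂ ^ 4) * L12norm f * |e₁ - e₂| := by
        simp only [rhoD_eq_integral_energyWeight]
        exact density_lipschitz_general 3 le_rfl (hsub h₁) (hsub h₂) hf.1 hf.2
    _ = 5 / (e₁ ^ 4 * e₂ ^ 4) * L12norm f * |e₁ - e₂| := by norm_num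
    _ ≤ 5 / (e₁ ^ 4 * e₂ ^ 6) * L12norm f * |e₁ - e₂| := by
        have hpow : e₂ ^ 6 ≤ e₂ ^ 4 := pow_le_pow_of_le_one he₂.le (hsub h₂).2 (by norm_num)
        gcongr
end

section
/- There is a constant C > 0 such that for all e₁, e₂ ∈ (0, 2/3] and every f ∈ L¹₂(ℝ³): |P(e₁,f) − P(e₂,f)| ≤ (C/(e₁⁴ e₂⁷)) ‖f‖ |e₁ − e₂|. -/
open MeasureTheory Real

/-!
Writing `(1 + |p̄|²/e²)^{-1/2} = e / √(e² + |p̄|²)` turns the weight in `P(e, f)` into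
`(p¹)² / (e⁴ √(e² + |p̄|²))`. The map `e ↦ √(e² + |p̄|²)` is 1-Lipschitz, being the norm of the
planar vector `(e, |p̄|)`, and `(p¹)²` is absorbed by the square roots in the denominators, so the
weight is locally Lipschitz in `e` with a constant of at most linear growth in `|p̄|`.
-/

lemma abs_sqrt_sq_add_sq_sub_sqrt_sq_add_sq_le (a b r : ℝ) :
    |√(a ^ 2 + r ^ 2) - √(b ^ 2 + r ^ 2)| ≤ |a - b| := by
  simpa [Complex.norm_add_mul_I, ← Complex.ofReal_sub] using
    abs_norm_sub_norm_le (a + r * Complex.I) (b + r * Complex.I)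

lemma abs_le_sqrt_sq_add_sq (a r : ℝ) : |r| ≤ √(a ^ 2 + r ^ 2) :=
  abs_le_sqrt (le_add_of_nonneg_left (sq_nonneg a))

lemma sq_div_sqrt_sq_add_sq_le (a r : ℝ) : r ^ 2 / √(a ^ 2 + r ^ 2) ≤ |r| := by
  refine div_le_of_le_mul₀ (sqrt_nonneg _) (abs_nonneg r) ?_
  calc r ^ 2 = |r| * |r| := by rw [← sq, sq_abs]
    _ ≤ |r| * √(a ^ 2 + r ^ 2) := by gcongr; exact abs_le_sqrt_sq_add_sq a r

lemma sq_div_sqrt_mul_sqrt_le_one (a b r : ℝ) :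
    r ^ 2 / (√(a ^ 2 + r ^ 2) * √(b ^ 2 + r ^ 2)) ≤ 1 := by
  refine div_le_one_of_le₀ ?_ (by positivity)
  calc r ^ 2 = |r| * |r| := by rw [← sq, sq_abs]
    _ ≤ √(a ^ 2 + r ^ 2) * √(b ^ 2 + r ^ 2) := by gcongr <;> exact abs_le_sqrt_sq_add_sq _ r

lemma abs_pow_four_sub_pow_four {a b : ℝ} (ha : 0 ≤ a) (hb : 0 ≤ b) :
    |a ^ 4 - b ^ 4| = (a + b) * (a ^ 2 + b ^ 2) * |a - b| := by
  rw [show a ^ 4 - b ^ 4 = (a + b) * (a ^ 2 + b ^ 2) * (a - b) by ring, abs_mul,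
    abs_of_nonneg (by positivity)]

lemma sq_mul_abs_inv_pow_four_mul_sqrt_sub_le {a b : ℝ} (ha : 0 < a) (hb : 0 < b) (r : ℝ) :
    r ^ 2 * |(a ^ 4 * √(a ^ 2 + r ^ 2))⁻¹ - (b ^ 4 * √(b ^ 2 + r ^ 2))⁻¹| ≤
      (1 / a ^ 4 + (a + b) * (a ^ 2 + b ^ 2) / (a ^ 4 * b ^ 4) * |r|) * |a - b| := by
  set s := √(a ^ 2 + r ^ 2)
  set t := √(b ^ 2 + r ^ 2)
  have hs : 0 < s := sqrt_pos.mpr (by positivity)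
  have ht : 0 < t := sqrt_pos.mpr (by positivity)
  have sqrt_diff : |t - s| ≤ |a - b| :=
    (abs_sub_comm t s).trans_le (abs_sqrt_sq_add_sq_sub_sqrt_sq_add_sq_le a b r)
  have pow_diff : |b ^ 4 - a ^ 4| = (a + b) * (a ^ 2 + b ^ 2) * |a - b| :=
    (abs_sub_comm _ _).trans (abs_pow_four_sub_pow_four ha.le hb.le)
  have sq_le_one : r ^ 2 / (s * t) ≤ 1 := sq_div_sqrt_mul_sqrt_le_one a b r
  have sq_le_abs : r ^ 2 / t ≤ |r| := sq_div_sqrt_sq_add_sq_le b r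
  have split : (a ^ 4 * s)⁻¹ - (b ^ 4 * t)⁻¹ =
      (t - s) / (a ^ 4 * (s * t)) + (b ^ 4 - a ^ 4) / (a ^ 4 * b ^ 4 * t) := by
    field_simp
    ring
  calc r ^ 2 * |(a ^ 4 * s)⁻¹ - (b ^ 4 * t)⁻¹|
      ≤ r ^ 2 * (|t - s| / (a ^ 4 * (s * t)) + |b ^ 4 - a ^ 4| / (a ^ 4 * b ^ 4 * t)) := by
        rw [split]
        gcongr
        refine (abs_add_le _ _).trans_eq ?_
        rw [abs_div, abs_div, abs_of_pos (by positivity : 0 < a ^ 4 * (s * t)),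
          abs_of_pos (by positivity : 0 < a ^ 4 * b ^ 4 * t)]
    _ = r ^ 2 / (s * t) * (1 / a ^ 4) * |t - s| + (a + b) * (a ^ 2 + b ^ 2) / (a ^ 4 * b ^ 4) *
          (r ^ 2 / t) * |a - b| := by
        rw [pow_diff]
        ring
    _ ≤ 1 * (1 / a ^ 4) * |a - b| + (a + b) * (a ^ 2 + b ^ 2) / (a ^ 4 * b ^ 4) *
          |r| * |a - b| := by
        gcongr
    _ = (1 / a ^ 4 + (a + b) * (a ^ 2 + b ^ 2) / (a ^ 4 * b ^ 4) * |r|) * |a - b| := by ring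

lemma abs_integral_mul_sub_integral_mul_le {α : Type*} [MeasurableSpace α] {μ : Measure α}
    {k₁ k₂ w f : α → ℝ} {c : ℝ} (hk₁ : Integrable (fun x => k₁ x * f x) μ)
    (hk₂ : Integrable (fun x => k₂ x * f x) μ) (hw : Integrable (fun x => w x * |f x|) μ)
    (hle : ∀ᵐ x ∂μ, |k₁ x - k₂ x| ≤ c * w x) :
    |∫ x, k₁ x * f x ∂μ - ∫ x, k₂ x * f x ∂μ| ≤ c * ∫ x, w x * |f x| ∂μ := by
  rw [← integral_sub hk₁ hk₂, ← integral_const_mul, ← norm_eq_abs]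
  refine norm_integral_le_of_norm_le (hw.const_mul c) (hle.mono fun x hx => ?_)
  rw [← sub_mul, norm_mul, norm_eq_abs, norm_eq_abs, ← mul_assoc]
  exact mul_le_mul_of_nonneg_right hx (abs_nonneg _)

lemma one_le_wt (p : R3) : 1 ≤ wt p :=
  one_le_sqrt.mpr (le_add_of_nonneg_right (sq_nonneg _))

lemma norm_le_wt (p : R3) : ‖p‖ ≤ wt p :=
  le_sqrt_of_sq_le (le_add_of_nonneg_left zero_le_one)

lemma sq_apply_le_norm_sq {ι : Type*} [Fintype ι] (p : EuclideanSpace ℝ ι) (i : ι) :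
    p i ^ 2 ≤ ‖p‖ ^ 2 :=
  sq_le_sq' (neg_le_of_abs_le (PiLp.norm_apply_le p i)) (le_of_abs_le (PiLp.norm_apply_le p i))

/-- The weight against which `P(e, ·)` integrates, in the form obtained by multiplying numerator and
denominator of `e⁻⁵ (p¹)² (1 + |p̄|²/e²)^{-1/2}` by `e`; the two agree for `e > 0`. -/
noncomputable def pressureKernel (e : ℝ) (p : R3) : ℝ :=
  p 0 ^ 2 * (e ^ 4 * √(e ^ 2 + ‖p‖ ^ 2))⁻¹

/-- A Lipschitz constant, relative to the norm of `L¹₂(ℝ³)`, for the pressure between the parameters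
`a` and `b`. The first term comes from the variation of `√(e² + |p̄|²)`, the second from that of
`e⁴`. -/
noncomputable def pressureLipConst (a b : ℝ) : ℝ :=
  1 / a ^ 4 + (a + b) * (a ^ 2 + b ^ 2) / (a ^ 4 * b ^ 4)

lemma PD_eq_integral_pressureKernel {e : ℝ} (he : 0 < e) (f : R3 → ℝ) :
    PD e f = ∫ p, pressureKernel e p * f p := by
  rw [PD, ← integral_const_mul]
  refine integral_congr_ae (.of_forall fun p => ?_)
  have rescale : √(1 + ‖p‖ ^ 2 / e ^ 2) = √(e ^ 2 + ‖p‖ ^ 2) / e := by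
    rw [show 1 + ‖p‖ ^ 2 / e ^ 2 = (e ^ 2 + ‖p‖ ^ 2) / e ^ 2 by field_simp,
      sqrt_div (by positivity), sqrt_sq he.le]
  simp only [pressureKernel, rescale]
  field_simp

lemma abs_pressureKernel_le (e : ℝ) (p : R3) : |pressureKernel e p| ≤ (e ^ 4)⁻¹ * wt p := by
  rw [pressureKernel, abs_of_nonneg (by positivity)]
  calc p 0 ^ 2 * (e ^ 4 * √(e ^ 2 + ‖p‖ ^ 2))⁻¹
      ≤ ‖p‖ ^ 2 * (e ^ 4 * √(e ^ 2 + ‖p‖ ^ 2))⁻¹ :=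
        mul_le_mul_of_nonneg_right (sq_apply_le_norm_sq p 0) (by positivity)
    _ = (e ^ 4)⁻¹ * (‖p‖ ^ 2 / √(e ^ 2 + ‖p‖ ^ 2)) := by rw [mul_inv]; ring
    _ ≤ (e ^ 4)⁻¹ * wt p := by
        gcongr
        exact (sq_div_sqrt_sq_add_sq_le e ‖p‖).trans (by rw [abs_norm]; exact norm_le_wt p)

lemma abs_pressureKernel_sub_le {a b : ℝ} (ha : 0 < a) (hb : 0 < b) (p : R3) :
    |pressureKernel a p - pressureKernel b p| ≤
      pressureLipConst a b * |a - b| * wt p := by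
  have coeff_le : 1 / a ^ 4 + (a + b) * (a ^ 2 + b ^ 2) / (a ^ 4 * b ^ 4) * ‖p‖ ≤
      1 / a ^ 4 * wt p + (a + b) * (a ^ 2 + b ^ 2) / (a ^ 4 * b ^ 4) * wt p := by
    gcongr
    · exact le_mul_of_one_le_right (by positivity) (one_le_wt p)
    · exact norm_le_wt p
  rw [pressureKernel, pressureKernel, ← mul_sub, abs_mul, abs_sq]
  calc p 0 ^ 2 * |(a ^ 4 * √(a ^ 2 + ‖p‖ ^ 2))⁻¹ - (b ^ 4 * √(b ^ 2 + ‖p‖ ^ 2))⁻¹|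
      ≤ ‖p‖ ^ 2 * |(a ^ 4 * √(a ^ 2 + ‖p‖ ^ 2))⁻¹ - (b ^ 4 * √(b ^ 2 + ‖p‖ ^ 2))⁻¹| :=
        mul_le_mul_of_nonneg_right (sq_apply_le_norm_sq p 0) (abs_nonneg _)
    _ ≤ (1 / a ^ 4 + (a + b) * (a ^ 2 + b ^ 2) / (a ^ 4 * b ^ 4) * ‖p‖) * |a - b| := by
        simpa only [abs_norm] using sq_mul_abs_inv_pow_four_mul_sqrt_sub_le ha hb ‖p‖
    _ ≤ (1 / a ^ 4 * wt p + (a + b) * (a ^ 2 + b ^ 2) / (a ^ 4 * b ^ 4) * wt p) * |a - b| := by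
        gcongr
    _ = pressureLipConst a b * |a - b| * wt p := by rw [pressureLipConst]; ring

lemma measurable_pressureKernel (e : ℝ) : Measurable (pressureKernel e) := by
  unfold pressureKernel
  fun_prop

lemma integrable_pressureKernel_mul (e : ℝ) {f : R3 → ℝ} (hf : MemL12 f) :
    Integrable (fun p => pressureKernel e p * f p) := by
  refine (hf.2.const_mul (e ^ 4)⁻¹).mono'
    ((measurable_pressureKernel e).aestronglyMeasurable.mul hf.1) (.of_forall fun p => ?_)
  rw [norm_mul, norm_eq_abs, norm_eq_abs, ← mul_assoc]
  exact mul_le_mul_of_nonneg_right (abs_pressureKernel_le e p) (abs_nonneg _)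

lemma L12norm_nonneg (f : R3 → ℝ) : 0 ≤ L12norm f :=
  integral_nonneg fun p => mul_nonneg (sqrt_nonneg _) (abs_nonneg (f p))

lemma abs_PD_sub_le {a b : ℝ} (ha : 0 < a) (hb : 0 < b) {f : R3 → ℝ} (hf : MemL12 f) :
    |PD a f - PD b f| ≤ pressureLipConst a b * |a - b| * L12norm f := by
  rw [PD_eq_integral_pressureKernel ha, PD_eq_integral_pressureKernel hb]
  exact abs_integral_mul_sub_integral_mul_le (integrable_pressureKernel_mul a hf)
    (integrable_pressureKernel_mul b hf) hf.2
    (.of_forall (abs_pressureKernel_sub_le ha hb))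

lemma pressureLipConst_le {a b M : ℝ} (ha : a ∈ Set.Ioc 0 M) (hb : b ∈ Set.Ioc 0 M) :
    pressureLipConst a b ≤ (M ^ 7 + 4 * M ^ 6) / (a ^ 4 * b ^ 7) := by
  obtain ⟨ha, haM⟩ := ha
  obtain ⟨hb, hbM⟩ := hb
  have hM : 0 ≤ M := ha.le.trans haM
  calc pressureLipConst a b
      = (b ^ 7 + (a + b) * (a ^ 2 + b ^ 2) * b ^ 3) / (a ^ 4 * b ^ 7) := by
        rw [pressureLipConst]
        field_simp
    _ ≤ (M ^ 7 + (M + M) * (M ^ 2 + M ^ 2) * M ^ 3) / (a ^ 4 * b ^ 7) := by gcongr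
    _ = (M ^ 7 + 4 * M ^ 6) / (a ^ 4 * b ^ 7) := by ring

theorem pressure_lipschitz_general {e₁ e₂ M : ℝ} (he₁ : e₁ ∈ Set.Ioc 0 M)
    (he₂ : e₂ ∈ Set.Ioc 0 M) {f : R3 → ℝ} (hf : MemL12 f) :
    |PD e₁ f - PD e₂ f| ≤
      (M ^ 7 + 4 * M ^ 6) / (e₁ ^ 4 * e₂ ^ 7) * L12norm f * |e₁ - e₂| := by
  rw [mul_right_comm]
  refine (abs_PD_sub_le he₁.1 he₂.1 hf).trans ?_
  gcongr
  · exact L12norm_nonneg f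
  · exact pressureLipConst_le he₁ he₂

/-- Lipschitz estimate in `e` for the pressure `P(e, f)`. -/
theorem pressure_lipschitz :
    ∃ C : ℝ, 0 < C ∧ ∀ e₁ ∈ Set.Ioc (0:ℝ) (2/3), ∀ e₂ ∈ Set.Ioc (0:ℝ) (2/3),
      ∀ f : R3 → ℝ, MemL12 f →
        |PD e₁ f - PD e₂ f| ≤ C / (e₁ ^ 4 * e₂ ^ 7) * L12norm f * |e₁ - e₂| :=
  ⟨(2 / 3) ^ 7 + 4 * (2 / 3) ^ 6, by positivity,
    fun _ he₁ _ he₂ _ hf => pressure_lipschitz_general he₁ he₂ hf⟩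
end

section
/- Let Λ > 0, δ > 0, t₀ ≥ 0, and let f : [t₀, t₀+δ] → L¹₂(ℝ³) be continuous with f(t) ≥ 0 a.e. for each t. Let e, θ : [t₀, t₀+δ] → ℝ be differentiable with e(t) ∈ (0, 2/3] for all t and θ(t₀) ≥ 0, satisfying e'(t) = −θ(t)e(t)/3 and θ'(t) = −θ(t)²/3 − 4π(ρ(e(t),f(t)) + 3P(e(t),f(t))) + Λ on [t₀, t₀+δ]. Then for all t ∈ [0, δ]: (i) θ(t₀+t) ≤ θ(t₀) + Λt; (ii) the function a := 1/e satisfies a(t₀+t) ≤ a(t₀) · exp((θ(t₀)/3 + Λ/3)(t₀+t+1)²). -/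
open MeasureTheory Real

/-!
The matter enters only through the strong energy condition `0 ≤ ρ + 3P`: it gives `θ' ≤ Λ`, hence
`θ` grows at most linearly. The scale factor `a = 1/e` satisfies the linear equation `a' = (θ/3) a`,
so inserting the linear bound on `θ` and multiplying by the integrating factor gives
`a(t₀+t) ≤ a(t₀) exp(θ(t₀) t / 3 + Λ t² / 6)`, which is sharper than the stated exponential bound.
-/

section MatterNonneg

variable {e : ℝ} {f : R3 → ℝ}

lemma rhoD_nonneg (he : 0 ≤ e) (hf : 0 ≤ᵐ[volume] f) : 0 ≤ rhoD e f := by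
  refine mul_nonneg (by positivity) (integral_nonneg_of_ae ?_)
  filter_upwards [hf] with p hp
  exact mul_nonneg (sqrt_nonneg _) hp

lemma PD_nonneg (he : 0 ≤ e) (hf : 0 ≤ᵐ[volume] f) : 0 ≤ PD e f := by
  refine mul_nonneg (by positivity) (integral_nonneg_of_ae ?_)
  filter_upwards [hf] with p hp
  exact mul_nonneg (by positivity) hp

end MatterNonneg

section DifferentialInequalities

variable {s : Set ℝ} {t₀ t : ℝ}

lemma le_add_mul_sub_of_hasDerivWithinAt_le (hs : Convex ℝ s) {u u' : ℝ → ℝ} {C : ℝ}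
    (hu : ∀ x ∈ s, HasDerivWithinAt u (u' x) s x) (hC : ∀ x ∈ s, u' x ≤ C)
    (ht₀ : t₀ ∈ s) (ht : t ∈ s) (h : t₀ ≤ t) : u t ≤ u t₀ + C * (t - t₀) := by
  have hu_int : ∀ x ∈ interior s, HasDerivAt u (u' x) x := fun x hx =>
    (hu x (interior_subset hx)).hasDerivAt (mem_interior_iff_mem_nhds.1 hx)
  have h_sub : u t - u t₀ ≤ C * (t - t₀) :=
    hs.image_sub_le_mul_sub_of_deriv_le (fun x hx => (hu x hx).continuousWithinAt)
      (fun x hx => (hu_int x hx).differentiableAt.differentiableWithinAt)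
      (fun x hx => (hu_int x hx).deriv.trans_le (hC x (interior_subset hx))) t₀ ht₀ t ht h
  linarith

lemma le_mul_exp_sub_of_hasDerivWithinAt_le_mul (hs : Convex ℝ s) {u u' φ φ' : ℝ → ℝ}
    (hu : ∀ x ∈ s, HasDerivWithinAt u (u' x) s x) (hφ : ∀ x ∈ s, HasDerivWithinAt φ (φ' x) s x)
    (hle : ∀ x ∈ s, u' x ≤ φ' x * u x) (ht₀ : t₀ ∈ s) (ht : t ∈ s) (h : t₀ ≤ t) :
    u t ≤ u t₀ * exp (φ t - φ t₀) := by
  have hderiv : ∀ x ∈ s, HasDerivWithinAt (fun x => u x * exp (-φ x))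
      ((u' x - φ' x * u x) * exp (-φ x)) s x := fun x hx =>
    ((hu x hx).mul (hφ x hx).fun_neg.exp).congr_deriv (by ring)
  have hanti : AntitoneOn (fun x => u x * exp (-φ x)) s :=
    antitoneOn_of_hasDerivWithinAt_nonpos hs (fun x hx => (hderiv x hx).continuousWithinAt)
      (fun x hx => (hderiv x (interior_subset hx)).mono interior_subset)
      (fun x hx => mul_nonpos_of_nonpos_of_nonneg
        (sub_nonpos.2 (hle x (interior_subset hx))) (exp_nonneg _))
  calc u t = u t * exp (-φ t) * exp (φ t) := by rw [mul_assoc, ← exp_add]; simp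
    _ ≤ u t₀ * exp (-φ t₀) * exp (φ t) :=
      mul_le_mul_of_nonneg_right (hanti ht₀ ht h) (exp_nonneg _)
    _ = u t₀ * exp (φ t - φ t₀) := by rw [mul_assoc, ← exp_add, neg_add_eq_sub]

end DifferentialInequalities

section Raychaudhuri

variable {Λ : ℝ} {s : Set ℝ} {e θ : ℝ → ℝ} {t₀ t : ℝ}

lemma hasDerivWithinAt_inv_of_neg_mul_div_three {H : ℝ} (he : e t ≠ 0)
    (hde : HasDerivWithinAt e (-H * e t / 3) s t) :
    HasDerivWithinAt (fun x => (e x)⁻¹) (H / 3 * (e t)⁻¹) s t :=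
  (hde.fun_inv he).congr_deriv (by field_simp)

lemma inv_le_inv_mul_exp_of_le_add_mul_sub (hs : Convex ℝ s) (he : ∀ x ∈ s, 0 < e x)
    (hde : ∀ x ∈ s, HasDerivWithinAt e (-(θ x) * e x / 3) s x)
    (hθ : ∀ x ∈ s, t₀ ≤ x → θ x ≤ θ t₀ + Λ * (x - t₀))
    (ht₀ : t₀ ∈ s) (ht : t ∈ s) (h : t₀ ≤ t) :
    (e t)⁻¹ ≤ (e t₀)⁻¹ * exp (θ t₀ / 3 * (t - t₀) + Λ / 6 * (t - t₀) ^ 2) := by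
  let φ : ℝ → ℝ := fun x => θ t₀ / 3 * (x - t₀) + Λ / 6 * (x - t₀) ^ 2
  have hφ (x : ℝ) : HasDerivAt φ ((θ t₀ + Λ * (x - t₀)) / 3) x := by
    have hid := (hasDerivAt_id' x).sub_const t₀
    exact ((hid.const_mul (θ t₀ / 3)).add ((hid.fun_pow 2).const_mul (Λ / 6))).congr_deriv
      (by norm_num; ring)
  have hgrowth : ∀ x ∈ s ∩ Set.Ici t₀,
      θ x / 3 * (e x)⁻¹ ≤ (θ t₀ + Λ * (x - t₀)) / 3 * (e x)⁻¹ := fun x hx => by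
    have := he x hx.1
    gcongr
    exact hθ x hx.1 hx.2
  simpa [φ] using le_mul_exp_sub_of_hasDerivWithinAt_le_mul (hs.inter (convex_Ici t₀))
    (fun x hx => (hasDerivWithinAt_inv_of_neg_mul_div_three (he x hx.1).ne' (hde x hx.1)).mono
      Set.inter_subset_left)
    (fun x _ => (hφ x).hasDerivWithinAt) hgrowth ⟨ht₀, Set.self_mem_Ici⟩ ⟨ht, h⟩ h

theorem raychaudhuri_apriori_estimates_general (hs : Convex ℝ s) {ρ P : ℝ → ℝ}
    (hρP : ∀ x ∈ s, 0 ≤ ρ x + 3 * P x) (he : ∀ x ∈ s, 0 < e x)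
    (hde : ∀ x ∈ s, HasDerivWithinAt e (-(θ x) * e x / 3) s x)
    (hdθ : ∀ x ∈ s, HasDerivWithinAt θ (-(θ x ^ 2) / 3 - 4 * π * (ρ x + 3 * P x) + Λ) s x)
    (ht₀ : t₀ ∈ s) (ht : t₀ + t ∈ s) (h : 0 ≤ t) :
    θ (t₀ + t) ≤ θ t₀ + Λ * t ∧
      (e (t₀ + t))⁻¹ ≤ (e t₀)⁻¹ * exp (θ t₀ / 3 * t + Λ / 6 * t ^ 2) := by
  have hθ' : ∀ x ∈ s, -(θ x ^ 2) / 3 - 4 * π * (ρ x + 3 * P x) + Λ ≤ Λ := fun x hx => by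
    have := mul_nonneg (by positivity : 0 ≤ 4 * π) (hρP x hx)
    linarith [sq_nonneg (θ x)]
  have hθ : ∀ x ∈ s, t₀ ≤ x → θ x ≤ θ t₀ + Λ * (x - t₀) := fun x hx =>
    le_add_mul_sub_of_hasDerivWithinAt_le hs hdθ hθ' ht₀ hx
  have h' : t₀ ≤ t₀ + t := le_add_of_nonneg_right h
  have ha := inv_le_inv_mul_exp_of_le_add_mul_sub hs he hde hθ ht₀ ht h'
  exact ⟨by simpa using hθ _ ht h', by simpa using ha⟩

lemma mul_add_mul_sq_le_mul_add_one_sq {c : ℝ} (hc : 0 ≤ c) (hΛ : 0 ≤ Λ) (ht₀ : 0 ≤ t₀)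
    (ht : 0 ≤ t) : c / 3 * t + Λ / 6 * t ^ 2 ≤ (c / 3 + Λ / 3) * (t₀ + t + 1) ^ 2 := by
  have h_linear : t ≤ (t₀ + t + 1) ^ 2 := by nlinarith
  have h_quadratic : t ^ 2 ≤ (t₀ + t + 1) ^ 2 := by gcongr; linarith
  calc c / 3 * t + Λ / 6 * t ^ 2
      ≤ c / 3 * (t₀ + t + 1) ^ 2 + Λ / 3 * (t₀ + t + 1) ^ 2 := by gcongr; norm_num
    _ = (c / 3 + Λ / 3) * (t₀ + t + 1) ^ 2 := by ring

end Raychaudhuri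

/-- A priori estimates for the Raychaudhuri system: linear bound on
`θ` and exponential bound on `a = 1/e`. -/
theorem raychaudhuri_apriori_estimates
    (Λ δ t₀ : ℝ) (hΛ : 0 < Λ) (hδ : 0 < δ) (ht₀ : 0 ≤ t₀)
    (f : ℝ → R3 → ℝ)
    (hfmem : ∀ t ∈ Set.Icc t₀ (t₀ + δ), MemL12 (f t))
    (hfpos : ∀ t ∈ Set.Icc t₀ (t₀ + δ), ∀ᵐ p : R3, 0 ≤ f t p)
    (hfc : ContL12 (Set.Icc t₀ (t₀ + δ)) f)
    (e θ : ℝ → ℝ)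
    (he_range : ∀ t ∈ Set.Icc t₀ (t₀ + δ), e t ∈ Set.Ioc (0:ℝ) (2/3))
    (hθ0 : 0 ≤ θ t₀)
    (hde : ∀ t ∈ Set.Icc t₀ (t₀ + δ),
      HasDerivWithinAt e (-(θ t) * e t / 3) (Set.Icc t₀ (t₀ + δ)) t)
    (hdθ : ∀ t ∈ Set.Icc t₀ (t₀ + δ),
      HasDerivWithinAt θ
        (-(θ t ^ 2) / 3 - 4 * π * (rhoD (e t) (f t) + 3 * PD (e t) (f t)) + Λ)
        (Set.Icc t₀ (t₀ + δ)) t) :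
    ∀ t ∈ Set.Icc (0:ℝ) δ,
      θ (t₀ + t) ≤ θ t₀ + Λ * t ∧
      (e (t₀ + t))⁻¹ ≤ (e t₀)⁻¹ * Real.exp ((θ t₀ / 3 + Λ / 3) * (t₀ + t + 1) ^ 2) := by
  intro t ht
  have ht₀_mem : t₀ ∈ Set.Icc t₀ (t₀ + δ) := Set.left_mem_Icc.2 (by linarith)
  have he_pos : ∀ s ∈ Set.Icc t₀ (t₀ + δ), 0 < e s := fun s hs => (he_range s hs).1
  have hsource : ∀ s ∈ Set.Icc t₀ (t₀ + δ), 0 ≤ rhoD (e s) (f s) + 3 * PD (e s) (f s) :=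
    fun s hs => add_nonneg (rhoD_nonneg (he_pos s hs).le (hfpos s hs))
      (mul_nonneg zero_le_three (PD_nonneg (he_pos s hs).le (hfpos s hs)))
  obtain ⟨hθ, ha⟩ := raychaudhuri_apriori_estimates_general (convex_Icc t₀ (t₀ + δ))
    hsource he_pos hde hdθ ht₀_mem ⟨by linarith [ht.1], by linarith [ht.2]⟩ ht.1
  refine ⟨hθ, ha.trans ?_⟩
  have he₀ := he_pos t₀ ht₀_mem
  gcongr
  exact mul_add_mul_sq_le_mul_add_one_sq hθ0 hΛ.le ht₀ ht.1
end
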